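/- (Equivalence of the minimum-cost reach-avoid problem and its epigraph reformulation) Assume c(x,u) ≥ 0 for all x, u. Call a pair (π, T) of a policy π : X → U and a horizon T ∈ ℕ feasible if the trajectory x_{t+1}^π = f(x_t^π, π(x_t^π)) from x₀ satisfies g(x_T^π) ≤ 0 and x_t^π ∉ F for all t ∈ {0,…,T}. Assume at least one feasible pair exists. Then the infimum over feasible pairs (π,T) of the cumulative cost Σ_{k=0}^{T-1} c(x_k^π, π(x_k^π)) equals the infimum of the set { z₀ ∈ ℝ | there exist a policy π and T ∈ ℕ such that ĝ(x_T^π, y_T^π, z_T^{π,z₀}) ≤ 0 }, where (y_t^π, z_t^{π,z₀}) is the augmented trajectory under π with initial budget z₀. -/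

import Mathlib

open Classical

/-- The trajectory `x_{t+1} = f (x_t) (π (x_t))` from initial state `x₀`. -/
def traj {X U : Type*} (f : X → U → X) (π : X → U) (x₀ : X) : ℕ → X
  | 0 => x₀
  | t + 1 => f (traj f π x₀ t) (π (traj f π x₀ t))

/-- The augmented `y`-component: `y₀ = 𝕀(x₀ ∈ F)`,
`y_{t+1} = max (𝕀(x_{t+1} ∈ F)) (y_t)`. -/
noncomputable def ytraj {X U : Type*} (f : X → U → X) (π : X → U) (F : Set X)
    (x₀ : X) : ℕ → ℝ
  | 0 => if x₀ ∈ F then 1 else -1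
  | t + 1 => max (if traj f π x₀ (t + 1) ∈ F then (1 : ℝ) else -1)
      (ytraj f π F x₀ t)

/-- The augmented `z`-component (remaining cost budget):
`z_{t+1} = z_t - c (x_t) (π (x_t))` with `z_0 = z₀`. -/
def ztraj {X U : Type*} (f : X → U → X) (π : X → U) (c : X → U → ℝ)
    (x₀ : X) (z₀ : ℝ) : ℕ → ℝ
  | 0 => z₀
  | t + 1 => ztraj f π c x₀ z₀ t - c (traj f π x₀ t) (π (traj f π x₀ t))

/-!
Since `z_T = z₀ - ∑ c` and `y_T ≤ 0` exactly when the trajectory has avoided `F`, the condition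
`ĝ ≤ 0` says that `(π, T)` is feasible and costs at most `z₀`. The budgets meeting it are therefore
the upper closure of the set of feasible costs, and a set has the same lower bounds as its upper
closure.
-/

/-- Feasibility of the pair `(π, T)` in the reach-avoid problem: the trajectory is in the goal
region `{g ≤ 0}` at time `T` and outside the avoid set at all times `0, …, T`. -/
def IsFeasible {X U : Type*} (f : X → U → X) (g : X → ℝ) (F : Set X) (x₀ : X)
    (π : X → U) (T : ℕ) : Prop :=
  g (traj f π x₀ T) ≤ 0 ∧ ∀ t ≤ T, traj f π x₀ t ∉ F

/-- The cost accumulated by `π` before time `T`; the state at time `T` is not charged. -/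
def cumulativeCost {X U : Type*} (f : X → U → X) (c : X → U → ℝ) (x₀ : X)
    (π : X → U) (T : ℕ) : ℝ :=
  ∑ k ∈ Finset.range T, c (traj f π x₀ k) (π (traj f π x₀ k))

/-- The values of the minimum-cost reach-avoid problem: the costs of the feasible pairs. -/
def feasibleCosts {X U : Type*} (f : X → U → X) (c : X → U → ℝ) (g : X → ℝ) (F : Set X)
    (x₀ : X) : Set ℝ :=
  {v | ∃ (π : X → U) (T : ℕ), IsFeasible f g F x₀ π T ∧ v = cumulativeCost f c x₀ π T}

/-- The budgets from which some policy drives the augmented state into the sublevel set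
`{ĝ ≤ 0}` of the augmented goal function, with `ĝ` written out. -/
def sufficientBudgets {X U : Type*} (f : X → U → X) (c : X → U → ℝ) (g : X → ℝ) (F : Set X)
    (x₀ : X) (C : ℝ) : Set ℝ :=
  {z₀ | ∃ (π : X → U) (T : ℕ),
    max (g (traj f π x₀ T)) (max (C * ytraj f π F x₀ T) (-(ztraj f π c x₀ z₀ T))) ≤ 0}

theorem csInf_upperClosure {α : Type*} [ConditionallyCompleteLattice α] {s : Set α}
    (hne : s.Nonempty) (hbdd : BddBelow s) : sInf (upperClosure s : Set α) = sInf s := by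
  have hglb : IsGLB (upperClosure s : Set α) (sInf s) := by
    rw [IsGLB, lowerBounds_upperClosure]
    exact isGLB_csInf hne hbdd
  exact hglb.csInf_eq (hne.mono subset_upperClosure)

theorem ite_one_neg_one_nonpos_iff {R : Type*} [Ring R] [PartialOrder R] [IsOrderedRing R]
    [Nontrivial R] {p : Prop} [Decidable p] : (if p then (1 : R) else -1) ≤ 0 ↔ ¬p := by
  split_ifs with hp <;> simp [hp, zero_lt_one.not_ge]

section

variable {X U : Type*} {f : X → U → X} {c : X → U → ℝ} {g : X → ℝ} {F : Set X} {x₀ : X}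
  {π : X → U} {T : ℕ}

theorem ytraj_nonpos_iff : ytraj f π F x₀ T ≤ 0 ↔ ∀ t ≤ T, traj f π x₀ t ∉ F := by
  induction T with
  | zero => simp only [ytraj, ite_one_neg_one_nonpos_iff, Nat.le_zero, forall_eq, traj]
  | succ T ih =>
    simp only [ytraj, max_le_iff, ite_one_neg_one_nonpos_iff, ih, Nat.le_succ_iff, or_imp,
      forall_and, forall_eq, and_comm]

theorem ztraj_eq_sub_cumulativeCost (z₀ : ℝ) :
    ztraj f π c x₀ z₀ T = z₀ - cumulativeCost f c x₀ π T := by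
  induction T with
  | zero => simp only [ztraj, cumulativeCost, Finset.sum_range_zero, sub_zero]
  | succ T ih =>
    rw [ztraj, ih, cumulativeCost, cumulativeCost, Finset.sum_range_succ, sub_sub]

theorem augmentedGoal_nonpos_iff {C : ℝ} (hC : 0 < C) (z₀ : ℝ) :
    max (g (traj f π x₀ T)) (max (C * ytraj f π F x₀ T) (-(ztraj f π c x₀ z₀ T))) ≤ 0 ↔
      IsFeasible f g F x₀ π T ∧ cumulativeCost f c x₀ π T ≤ z₀ := by
  have avoid : C * ytraj f π F x₀ T ≤ 0 ↔ ∀ t ≤ T, traj f π x₀ t ∉ F := by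
    rw [← le_div_iff₀' hC, zero_div, ytraj_nonpos_iff]
  have budget : -(ztraj f π c x₀ z₀ T) ≤ 0 ↔ cumulativeCost f c x₀ π T ≤ z₀ := by
    rw [neg_nonpos, ztraj_eq_sub_cumulativeCost, sub_nonneg]
  rw [max_le_iff, max_le_iff, avoid, budget, IsFeasible, and_assoc]

theorem sufficientBudgets_eq_upperClosure {C : ℝ} (hC : 0 < C) :
    sufficientBudgets f c g F x₀ C = upperClosure (feasibleCosts f c g F x₀) := by
  ext z₀
  simp only [sufficientBudgets, augmentedGoal_nonpos_iff hC, Set.mem_ofPred_eq,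
    SetLike.mem_coe, mem_upperClosure]
  constructor
  · rintro ⟨π, T, hfeas, hcost⟩
    exact ⟨_, ⟨π, T, hfeas, rfl⟩, hcost⟩
  · rintro ⟨_, ⟨π, T, hfeas, rfl⟩, hcost⟩
    exact ⟨π, T, hfeas, hcost⟩

theorem IsFeasible.feasibleCosts_nonempty (hfeas : IsFeasible f g F x₀ π T) :
    (feasibleCosts f c g F x₀).Nonempty :=
  ⟨_, π, T, hfeas, rfl⟩

theorem cumulativeCost_nonneg (hc : ∀ x u, 0 ≤ c x u) : 0 ≤ cumulativeCost f c x₀ π T :=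
  Finset.sum_nonneg fun _ _ => hc _ _

theorem bddBelow_feasibleCosts (hc : ∀ x u, 0 ≤ c x u) :
    BddBelow (feasibleCosts f c g F x₀) := by
  refine ⟨0, ?_⟩
  rintro _ ⟨π, T, _, rfl⟩
  exact cumulativeCost_nonneg hc

end

theorem min_cost_reach_avoid_epigraph_equivalence_general
    {X U : Type*} (f : X → U → X) (c : X → U → ℝ) (g : X → ℝ) (F : Set X)
    (x₀ : X) (C : ℝ) (hC : 0 < C)
    (hbdd : BddBelow (feasibleCosts f c g F x₀))
    (hfeas : ∃ (π : X → U) (T : ℕ), IsFeasible f g F x₀ π T) :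
    sInf (feasibleCosts f c g F x₀) = sInf (sufficientBudgets f c g F x₀ C) := by
  obtain ⟨π, T, hπT⟩ := hfeas
  rw [sufficientBudgets_eq_upperClosure hC, csInf_upperClosure hπT.feasibleCosts_nonempty hbdd]

/-- **Equivalence of the minimum-cost reach-avoid problem and its epigraph
reformulation.** Assume the cost is nonnegative and at least one feasible
policy-horizon pair exists. Then the infimum of the cumulative cost over
feasible pairs `(π, T)` (those whose trajectory reaches the goal
`{x | g x ≤ 0}` at time `T` while avoiding `F` up to time `T`) equals the
infimum of the set of budgets `z₀` for which some policy `π` and horizon `T`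
drive the augmented state into the augmented goal,
`gAug (x_T, y_T, z_T) = max (g x_T) (max (C * y_T) (-z_T)) ≤ 0`. -/
theorem min_cost_reach_avoid_epigraph_equivalence
    {X U : Type*} (f : X → U → X) (c : X → U → ℝ) (g : X → ℝ) (F : Set X)
    (x₀ : X) (C : ℝ) (hC : 0 < C)
    (hc : ∀ x u, 0 ≤ c x u)
    (hfeas : ∃ (π : X → U) (T : ℕ),
      g (traj f π x₀ T) ≤ 0 ∧ ∀ t ≤ T, traj f π x₀ t ∉ F) :
    sInf {v : ℝ | ∃ (π : X → U) (T : ℕ),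
        (g (traj f π x₀ T) ≤ 0 ∧ ∀ t ≤ T, traj f π x₀ t ∉ F) ∧
        v = ∑ k ∈ Finset.range T, c (traj f π x₀ k) (π (traj f π x₀ k))} =
      sInf {z₀ : ℝ | ∃ (π : X → U) (T : ℕ),
        max (g (traj f π x₀ T))
          (max (C * ytraj f π F x₀ T) (-(ztraj f π c x₀ z₀ T))) ≤ 0} :=
  min_cost_reach_avoid_epigraph_equivalence_general f c g F x₀ C hC
    (bddBelow_feasibleCosts hc) hfeas
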